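/- arXiv:1803.03978 — 2 statements merged into one kernel-verified Lean document; each statement's English description precedes it below -/
import Mathlib

section
/- Let $P$ be a finite nonempty subset of $\mathbb{R}^d$, let $k \ge 1$ be an integer, let $\varepsilon > 0$, and let $f : P \to P$ be a map satisfying $\sum_{p \in P} \operatorname{dist}(p, f(p)) \le \varepsilon \cdot \mathrm{Opt}_k(P)$, where $\mathrm{Opt}_k(P)$ is the optimal $k$-median cost of $P$. Let $S = f(P)$ be the image of $f$, weighted by $w(s) = |f^{-1}(s)|$ for each $s \in S$. Then for every finite nonempty set $C \subseteq \mathbb{R}^d$ with $|C| \le k$, $(1-\varepsilon)\Phi_M(P,C) \le \sum_{s \in S} w(s) \min_{c\in C}\operatorname{dist}(s,c) \le (1+\varepsilon)\Phi_M(P,C)$; that is, the weighted set $S$ is a $(k,\varepsilon)$-coreset of $P$ for the $k$-median cost. -/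
open scoped BigOperators Classical

noncomputable def minDist {d : ℕ} (x : EuclideanSpace ℝ (Fin d))
    (C : Finset (EuclideanSpace ℝ (Fin d))) : ℝ :=
  sInf ((fun c => dist x c) '' (C : Set (EuclideanSpace ℝ (Fin d))))

/-- The `k`-median cost `Φ_M(P, C) = ∑_{p ∈ P} min_{c ∈ C} dist p c`. -/
noncomputable def PhiM {d : ℕ} (P C : Finset (EuclideanSpace ℝ (Fin d))) : ℝ :=
  ∑ p ∈ P, minDist p C

/-- The optimal `k`-median cost of `P`. -/
noncomputable def OptM {d : ℕ} (k : ℕ) (P : Finset (EuclideanSpace ℝ (Fin d))) : ℝ :=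
  sInf {x : ℝ | ∃ C : Finset (EuclideanSpace ℝ (Fin d)),
    C.Nonempty ∧ C.card ≤ k ∧ x = PhiM P C}

theorem minDist_le_aux {d : ℕ} (x y : EuclideanSpace ℝ (Fin d))
    (C : Finset (EuclideanSpace ℝ (Fin d))) (hC : C.Nonempty) :
    minDist x C ≤ dist x y + minDist y C := by
  have h : minDist x C - dist x y ≤ minDist y C := by
    unfold minDist
    apply le_csInf
    · exact (Finset.coe_nonempty.mpr hC).image _
    · rintro _ ⟨c, hc, rfl⟩
      have h1 : sInf ((fun c => dist x c) '' (C : Set (EuclideanSpace ℝ (Fin d)))) ≤ dist x c :=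
        csInf_le ⟨0, by rintro _ ⟨c, _, rfl⟩; exact dist_nonneg⟩ ⟨c, hc, rfl⟩
      have h2 := dist_triangle x y c
      show _ ≤ dist y c
      linarith
  linarith

theorem PhiM_nonneg_aux {d : ℕ} (P C : Finset (EuclideanSpace ℝ (Fin d))) : 0 ≤ PhiM P C := by
  unfold PhiM minDist
  apply Finset.sum_nonneg
  intro p _
  apply Real.sInf_nonneg
  rintro _ ⟨c, _, rfl⟩
  exact dist_nonneg

theorem stmt4 (d k : ℕ) (hd : 1 ≤ d) (hk : 1 ≤ k) (ε : ℝ) (hε : 0 < ε)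
    (P : Finset (EuclideanSpace ℝ (Fin d))) (hP : P.Nonempty)
    (f : EuclideanSpace ℝ (Fin d) → EuclideanSpace ℝ (Fin d))
    (hf : ∀ p ∈ P, f p ∈ P)
    (hsum : ∑ p ∈ P, dist p (f p) ≤ ε * OptM k P) :
    ∀ C : Finset (EuclideanSpace ℝ (Fin d)), C.Nonempty → C.card ≤ k →
      (1 - ε) * PhiM P C ≤
          ∑ s ∈ P.image f, ((P.filter fun p => f p = s).card : ℝ) * minDist s C ∧
        ∑ s ∈ P.image f, ((P.filter fun p => f p = s).card : ℝ) * minDist s C ≤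
          (1 + ε) * PhiM P C := by
  intro C hC hCk
  have hopt : OptM k P ≤ PhiM P C :=
    csInf_le ⟨0, by rintro _ ⟨D, _, _, rfl⟩; exact PhiM_nonneg_aux P D⟩ ⟨C, hC, hCk, rfl⟩
  have hs : ∑ p ∈ P, dist p (f p) ≤ ε * PhiM P C :=
    hsum.trans (mul_le_mul_of_nonneg_left hopt hε.le)
  have hsumeq : ∑ s ∈ P.image f, ((P.filter fun p => f p = s).card : ℝ) * minDist s C
      = ∑ p ∈ P, minDist (f p) C := by
    rw [Finset.sum_comp (fun s => minDist s C) f]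
    simp only [nsmul_eq_mul]
  rw [hsumeq]
  have h1 : PhiM P C ≤ ∑ p ∈ P, dist p (f p) + ∑ p ∈ P, minDist (f p) C := by
    rw [← Finset.sum_add_distrib]
    exact Finset.sum_le_sum fun p _ => minDist_le_aux _ _ C hC
  have h2 : ∑ p ∈ P, minDist (f p) C ≤ ∑ p ∈ P, dist p (f p) + PhiM P C := by
    unfold PhiM
    rw [← Finset.sum_add_distrib]
    refine Finset.sum_le_sum fun p _ => ?_
    rw [dist_comm]
    exact minDist_le_aux _ _ C hC
  constructor <;> linarith
end

section
/- Let $d \ge 1$ and let $B = \prod_{i=1}^d [a_i,b_i]$ and $Q = \prod_{i=1}^d [c_i,d_i]$ be axis-parallel boxes in $\mathbb{R}^d$ with $a_i \le b_i$ and $c_i < d_i$ for all $i$. Fix an integer $t$ with $1 \le t \le d$. If every face of $Q$ of dimension strictly less than $t$ is disjoint from $B$, then there exists a set $I \subseteq \{1,\ldots,d\}$ with $|I| = t$ such that for every $i \in I$, both facets of $Q$ orthogonal to the $i$-th axis are disjoint from $B$. -/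
/-- The axis-parallel box `∏ i, [lo i, hi i]` in `ℝ^d`. -/
def box {d : ℕ} (lo hi : Fin d → ℝ) : Set (Fin d → ℝ) :=
  Set.univ.pi fun i => Set.Icc (lo i) (hi i)

/-- A face of the box `∏ i, [lo i, hi i]`, encoded by `σ : Fin d → Option Bool`:
`σ i = none` means the full interval `[lo i, hi i]`, `σ i = some false` means `{lo i}`,
and `σ i = some true` means `{hi i}`. -/
def face {d : ℕ} (lo hi : Fin d → ℝ) (σ : Fin d → Option Bool) : Set (Fin d → ℝ) :=
  Set.univ.pi fun i =>
    match σ i with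
    | none => Set.Icc (lo i) (hi i)
    | some false => {lo i}
    | some true => {hi i}

/-- The dimension of the face encoded by `σ`: the number of coordinates carrying the
full interval. -/
def faceDim {d : ℕ} (σ : Fin d → Option Bool) : ℕ :=
  (Finset.univ.filter fun i => σ i = none).card

theorem stmt10 (d t : ℕ) (hd : 1 ≤ d) (ht1 : 1 ≤ t) (htd : t ≤ d)
    (a b c e : Fin d → ℝ) (hab : ∀ i, a i ≤ b i) (hce : ∀ i, c i < e i)
    (hface : ∀ σ : Fin d → Option Bool, faceDim σ < t →
      Disjoint (face c e σ) (box a b)) :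
    ∃ I : Finset (Fin d), I.card = t ∧ ∀ i ∈ I, ∀ bit : Bool,
      Disjoint (face c e fun j => if j = i then some bit else none) (box a b) := by
  classical
  let S : Finset (Fin d) := Finset.univ.filter fun i => ∀ bit : Bool,
      Disjoint (face c e fun j => if j = i then some bit else none) (box a b)
  have hS : ∀ i, i ∈ S ↔ ∀ bit : Bool,
      Disjoint (face c e fun j => if j = i then some bit else none) (box a b) := by
    intro i
    simp [S]
  by_cases hc : t ≤ S.card
  · obtain ⟨I, hI, hcard⟩ := Finset.exists_subset_card_eq hc
    exact ⟨I, hcard, fun i hi => (hS i).1 (hI hi)⟩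
  · exfalso
    push Not at hc
    have key : ∀ i, ∃ (bit : Bool) (x : Fin d → ℝ), i ∉ S →
        x ∈ face c e (fun j => if j = i then some bit else none) ∧ x ∈ box a b := by
      intro i
      by_cases hi : i ∈ S
      · exact ⟨true, a, fun h => absurd hi h⟩
      · have h2 := hi
        rw [hS] at h2
        push Not at h2
        obtain ⟨bit, hb⟩ := h2
        obtain ⟨x, hx1, hx2⟩ := Set.not_disjoint_iff.1 hb
        exact ⟨bit, x, fun _ => ⟨hx1, hx2⟩⟩
    choose bit x hx using key
    obtain ⟨i0, hi0⟩ : ∃ i, i ∉ S := by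
      by_contra! h
      have : S = Finset.univ := Finset.eq_univ_iff_forall.2 h
      rw [this, Finset.card_univ, Fintype.card_fin] at hc
      omega
    have hdim : faceDim (fun i => if i ∈ S then none else some (bit i)) < t := by
      have : (Finset.univ.filter fun i => (if i ∈ S then none else some (bit i)) = none) = S := by
        ext i
        by_cases h : i ∈ S <;> simp [h]
      unfold faceDim
      rw [this]
      exact hc
    refine Set.not_disjoint_iff.2
      ⟨fun i => if i ∈ S then x i0 i else x i i, ?_, ?_⟩ (hface _ hdim)
    · intro i _
      by_cases h : i ∈ S
      · have h1 := (hx i0 hi0).1 i trivial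
        have hne : i ≠ i0 := fun hh => hi0 (hh ▸ h)
        simp only [if_neg hne] at h1
        simpa only [if_pos h] using h1
      · have h1 := (hx i h).1 i trivial
        simp only [if_true] at h1
        simpa only [if_neg h] using h1
    · intro i _
      by_cases h : i ∈ S
      · simpa only [if_pos h] using (hx i0 hi0).2 i trivial
      · simpa only [if_neg h] using (hx i h).2 i trivial
end
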